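/- Let s_1, s_2, s_3 be binary strings with s_1[1] = s_2[1] = s_3[1] and s_1[−1] = s_2[−1] = s_3[−1]. Then every mean z of s_1, s_2, s_3 satisfies z[1] = s_1[1] and z[−1] = s_1[−1]. -/

import Mathlib

/-- One step of a warping path: move down, right, or diagonally. -/
def wpStep (a b : ℕ × ℕ) : Prop :=
  (b.1 = a.1 + 1 ∧ b.2 = a.2) ∨ (b.1 = a.1 ∧ b.2 = a.2 + 1) ∨
    (b.1 = a.1 + 1 ∧ b.2 = a.2 + 1)

/-- A warping path of order `m × n` (0-based indices). -/
def IsWarpingPath (m n : ℕ) (p : List (ℕ × ℕ)) : Prop :=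
  p.head? = some (0, 0) ∧ p.getLast? = some (m - 1, n - 1) ∧
    List.Chain' wpStep p ∧ ∀ q ∈ p, q.1 < m ∧ q.2 < n

/-- The cost of aligning binary strings `x` and `y` along path `p`:
the number of aligned mismatching pairs (for binary symbols,
`(x[i] - y[j])^2` is `0` if the symbols agree and `1` otherwise). -/
def pathCost (x y : List Bool) (p : List (ℕ × ℕ)) : ℕ :=
  (p.map fun q => if x.getD q.1 false = y.getD q.2 false then 0 else 1).sum

/-- The squared dynamic time warping distance `dtw(x,y)²` of two binary strings. -/
noncomputable def dtwSq (x y : List Bool) : ℕ :=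
  sInf {c | ∃ p, IsWarpingPath x.length y.length p ∧ pathCost x y p = c}

/-- The dynamic time warping distance `dtw(x,y)`. -/
noncomputable def dtw (x y : List Bool) : ℝ :=
  Real.sqrt (dtwSq x y)

/-- The condensation of a binary string: collapse every maximal run of equal
consecutive symbols to a single symbol. -/
def condense : List Bool → List Bool
  | [] => []
  | [a] => [a]
  | a :: b :: rest => if a = b then condense (b :: rest) else a :: condense (b :: rest)

/-- Auxiliary function collecting the block sizes of a binary string. -/
def blockSizesAux : Bool → ℕ → List Bool → List ℕ
  | _, cnt, [] => [cnt]
  | cur, cnt, a :: rest =>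
      if a = cur then blockSizesAux cur (cnt + 1) rest
      else cnt :: blockSizesAux a 1 rest

/-- The list of block sizes of a binary string (sizes of the maximal runs
of equal consecutive symbols, from left to right). -/
def blockSizes : List Bool → List ℕ
  | [] => []
  | a :: rest => blockSizesAux a 1 rest

/-- The objective `F(z) = Σᵢ dtw(sᵢ, z)²`. -/
noncomputable def Fobj (ss : List (List Bool)) (z : List Bool) : ℕ :=
  (ss.map fun s => dtwSq s z).sum

/-- `z` is a mean of the strings `ss`: a nonempty binary string minimizing
`F` among all nonempty binary strings. -/
def IsMean (ss : List (List Bool)) (z : List Bool) : Prop :=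
  z ≠ [] ∧ ∀ w : List Bool, w ≠ [] → Fobj ss z ≤ Fobj ss w

/-- The optimal value of a Min 1-Separated Sum instance with integers `b`
(1-based indexing) and selection size `r`: minimize the sum of `r` selected
integers, no two of which are consecutive. -/
noncomputable def mssValue (b : List ℕ) (r : ℕ) : ℕ :=
  sInf {s | ∃ I : List ℕ, I.length = r ∧ (∀ i ∈ I, 1 ≤ i ∧ i ≤ b.length) ∧
    List.Chain' (fun a c => a + 2 ≤ c) I ∧
    (I.map fun i => b.getD (i - 1) 0).sum = s}


/-- mismatch cost -/
def mc (a b : Bool) : ℕ := if a = b then 0 else 1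

/-- inductive description of warping costs -/
inductive W : List Bool → List Bool → ℕ → Prop
  | single (a b : Bool) : W [a] [b] (mc a b)
  | down (a b : Bool) (x y : List Bool) (n : ℕ) : W x (b :: y) n → W (a :: x) (b :: y) (mc a b + n)
  | right (a b : Bool) (x y : List Bool) (n : ℕ) : W (a :: x) y n → W (a :: x) (b :: y) (mc a b + n)
  | diag (a b : Bool) (x y : List Bool) (n : ℕ) : W x y n → W (a :: x) (b :: y) (mc a b + n)

lemma W.ne {x y : List Bool} {n : ℕ} (h : W x y n) : x ≠ [] ∧ y ≠ [] := by
  cases h <;> simp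

lemma W.exists_cons (x y : List Bool) : ∀ (a b : Bool), ∃ n, W (a :: x) (b :: y) n := by
  induction x with
  | nil =>
    induction y with
    | nil => intro a b; exact ⟨_, W.single a b⟩
    | cons c y ih => intro a b; obtain ⟨n, hn⟩ := ih a c; exact ⟨_, W.right a b _ _ _ hn⟩
  | cons c x ih => intro a b; obtain ⟨n, hn⟩ := ih c b; exact ⟨_, W.down a b _ _ _ hn⟩

lemma W.snoc_down {x y : List Bool} {n : ℕ} (h : W x y n) (a b : Bool)
    (hb : y.getLast? = some b) : W (x ++ [a]) y (n + mc a b) := by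
  induction h with
  | single a' b' =>
    simp at hb; subst hb
    exact W.down _ _ _ _ _ (W.single _ _)
  | down a' b' x y n h ih =>
    rw [add_assoc]; exact W.down _ _ _ _ _ (ih hb)
  | right a' b' x y n h ih =>
    rw [add_assoc]
    refine W.right _ _ _ _ _ (ih ?_)
    have := h.ne.2
    cases y <;> simp_all
  | diag a' b' x y n h ih =>
    rw [add_assoc]
    refine W.diag _ _ _ _ _ (ih ?_)
    have := h.ne.2
    cases y <;> simp_all

lemma W.snoc_right {x y : List Bool} {n : ℕ} (h : W x y n) (a b : Bool)
    (hb : x.getLast? = some a) : W x (y ++ [b]) (n + mc a b) := by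
  induction h with
  | single a' b' =>
    simp at hb; subst hb
    exact W.right _ _ _ _ _ (W.single _ _)
  | right a' b' x y n h ih =>
    rw [add_assoc]; exact W.right _ _ _ _ _ (ih hb)
  | down a' b' x y n h ih =>
    rw [add_assoc]
    refine W.down _ _ _ _ _ (ih ?_)
    have := h.ne.1
    cases x <;> simp_all
  | diag a' b' x y n h ih =>
    rw [add_assoc]
    refine W.diag _ _ _ _ _ (ih ?_)
    have := h.ne.1
    cases x <;> simp_all

lemma W.snoc_diag {x y : List Bool} {n : ℕ} (h : W x y n) (a b : Bool) :
    W (x ++ [a]) (y ++ [b]) (n + mc a b) := by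
  induction h with
  | single a' b' => exact W.diag _ _ _ _ _ (W.single _ _)
  | right a' b' x y n h ih => rw [add_assoc]; exact W.right _ _ _ _ _ ih
  | down a' b' x y n h ih => rw [add_assoc]; exact W.down _ _ _ _ _ ih
  | diag a' b' x y n h ih => rw [add_assoc]; exact W.diag _ _ _ _ _ ih

lemma W.rev {x y : List Bool} {n : ℕ} (h : W x y n) : W x.reverse y.reverse n := by
  induction h with
  | single a' b' => exact W.single _ _
  | right a' b' x y n h ih =>
    rw [add_comm, List.reverse_cons (a := b')]; exact ih.snoc_right _ _ (by simp)
  | down a' b' x y n h ih =>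
    rw [add_comm, List.reverse_cons (a := a')]; exact ih.snoc_down _ _ (by simp)
  | diag a' b' x y n h ih =>
    rw [add_comm, List.reverse_cons, List.reverse_cons]; exact ih.snoc_diag _ _

lemma W.to_path {x y : List Bool} {n : ℕ} (h : W x y n) : ∀ (X Y : List Bool) (i j : ℕ),
    X.drop i = x → Y.drop j = y → ∃ p : List (ℕ × ℕ), p.head? = some (i, j) ∧
      p.getLast? = some (X.length - 1, Y.length - 1) ∧ List.IsChain wpStep p ∧
      (∀ q ∈ p, q.1 < X.length ∧ q.2 < Y.length) ∧ pathCost X Y p = n := by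
  have key : ∀ (X : List Bool) (i : ℕ) (a : Bool) (x : List Bool), X.drop i = a :: x →
      i < X.length ∧ X.getD i false = a ∧ X.drop (i + 1) = x ∧ X.length = i + 1 + x.length := by
    intro X i a x h
    have hi : i < X.length := by
      by_contra hc
      rw [List.drop_eq_nil_of_le (by omega)] at h
      simp at h
    have hl := congrArg List.length h
    rw [List.drop_eq_getElem_cons hi] at h
    rw [List.cons.injEq] at h
    simp at hl
    refine ⟨hi, ?_, h.2, by omega⟩
    rw [List.getD_eq_getElem _ _ hi, h.1]
  have ext : ∀ (X Y : List Bool) (i j i' j' n : ℕ) (p : List (ℕ × ℕ)),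
      i < X.length → j < Y.length → wpStep (i, j) (i', j') →
      (p.head? = some (i', j') ∧
      p.getLast? = some (X.length - 1, Y.length - 1) ∧ List.IsChain wpStep p ∧
      (∀ q ∈ p, q.1 < X.length ∧ q.2 < Y.length) ∧ pathCost X Y p = n) →
      ∃ p : List (ℕ × ℕ), p.head? = some (i, j) ∧
      p.getLast? = some (X.length - 1, Y.length - 1) ∧ List.IsChain wpStep p ∧
      (∀ q ∈ p, q.1 < X.length ∧ q.2 < Y.length) ∧
        pathCost X Y p = mc (X.getD i false) (Y.getD j false) + n := by
    rintro X Y i j i' j' n p hi hj hs ⟨p1, p2, p3, p4, p5⟩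
    refine ⟨(i, j) :: p, rfl, ?_, ?_, ?_, ?_⟩
    · cases p <;> simp_all
    · rw [List.isChain_cons]
      refine ⟨?_, p3⟩
      intro q hq
      rw [p1] at hq
      simp at hq
      rw [← hq]; exact hs
    · intro q hq
      rcases List.mem_cons.1 hq with rfl | hq
      · exact ⟨hi, hj⟩
      · exact p4 q hq
    · rw [← p5]; simp only [pathCost, mc, List.map_cons, List.sum_cons]
  induction h with
  | single a b =>
    intro X Y i j hx hy
    obtain ⟨h1, h2, h3, h4⟩ := key _ _ _ _ hx
    obtain ⟨g1, g2, g3, g4⟩ := key _ _ _ _ hy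
    refine ⟨[(i, j)], rfl, ?_, List.isChain_singleton _, ?_, ?_⟩
    · simp [h4, g4]
    · simp [h1, g1]
    · simp only [pathCost, List.map_cons, List.map_nil, h2, g2]; simp [mc]
  | down a b x y n h ih =>
    intro X Y i j hx hy
    obtain ⟨h1, h2, h3, h4⟩ := key _ _ _ _ hx
    obtain ⟨g1, g2, g3, g4⟩ := key _ _ _ _ hy
    obtain ⟨p, hp⟩ := ih X Y (i + 1) j h3 hy
    rw [← h2, ← g2]
    exact ext X Y i j _ _ n p h1 g1 (by simp [wpStep]) hp
  | right a b x y n h ih =>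
    intro X Y i j hx hy
    obtain ⟨h1, h2, h3, h4⟩ := key _ _ _ _ hx
    obtain ⟨g1, g2, g3, g4⟩ := key _ _ _ _ hy
    obtain ⟨p, hp⟩ := ih X Y i (j + 1) hx g3
    rw [← h2, ← g2]
    exact ext X Y i j _ _ n p h1 g1 (by simp [wpStep]) hp
  | diag a b x y n h ih =>
    intro X Y i j hx hy
    obtain ⟨h1, h2, h3, h4⟩ := key _ _ _ _ hx
    obtain ⟨g1, g2, g3, g4⟩ := key _ _ _ _ hy
    obtain ⟨p, hp⟩ := ih X Y (i + 1) (j + 1) h3 g3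
    rw [← h2, ← g2]
    exact ext X Y i j _ _ n p h1 g1 (by simp [wpStep]) hp

lemma drop_getD (X : List Bool) (i : ℕ) (hi : i < X.length) :
    X.drop i = X.getD i false :: X.drop (i + 1) := by
  rw [List.drop_eq_getElem_cons hi, List.getD_eq_getElem _ _ hi]

lemma W.of_path (X Y : List Bool) (p : List (ℕ × ℕ)) : ∀ (i j : ℕ), p.head? = some (i, j) →
      p.getLast? = some (X.length - 1, Y.length - 1) → List.IsChain wpStep p →
      (∀ q ∈ p, q.1 < X.length ∧ q.2 < Y.length) →
      W (X.drop i) (Y.drop j) (pathCost X Y p) := by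
  induction p with
  | nil => intro i j h; simp at h
  | cons q p ih =>
    intro i j h1 h2 h3 h4
    simp at h1
    subst h1
    obtain ⟨hi, hj⟩ := h4 (i, j) (by simp)
    simp only at hi hj
    have hc : pathCost X Y ((i, j) :: p)
        = mc (X.getD i false) (Y.getD j false) + pathCost X Y p := by
      simp only [pathCost, mc, List.map_cons, List.sum_cons]
    rw [hc]
    cases p with
    | nil =>
      simp at h2
      rw [drop_getD X i hi, drop_getD Y j hj, List.drop_eq_nil_of_le (by omega : X.length ≤ i + 1),
        List.drop_eq_nil_of_le (by omega : Y.length ≤ j + 1)]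
      exact W.single _ _
    | cons q' p =>
      obtain ⟨i', j'⟩ := q'
      have hs : wpStep (i, j) (i', j') := by
        rw [List.isChain_cons] at h3; exact h3.1 _ (by simp)
      have := ih i' j' rfl (by simpa using h2) (by rw [List.isChain_cons] at h3; exact h3.2)
        (fun q hq => h4 q (List.mem_cons_of_mem _ hq))
      rcases hs with ⟨e1, e2⟩ | ⟨e1, e2⟩ | ⟨e1, e2⟩ <;> simp only at e1 e2 <;> subst e1 <;> subst e2
      · rw [drop_getD Y _ hj] at this ⊢
        rw [drop_getD X _ hi]
        exact W.down _ _ _ _ _ this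
      · rw [drop_getD X _ hi] at this ⊢
        rw [drop_getD Y _ hj]
        exact W.right _ _ _ _ _ this
      · rw [drop_getD X _ hi, drop_getD Y _ hj]
        exact W.diag _ _ _ _ _ this

lemma dtwSq_eq (x y : List Bool) : dtwSq x y = sInf {n | W x y n} := by
  unfold dtwSq
  congr 1
  ext n
  constructor
  · rintro ⟨p, ⟨h1, h2, h3, h4⟩, rfl⟩
    exact W.of_path x y p 0 0 h1 h2 h3 h4
  · intro h
    obtain ⟨p, h1, h2, h3, h4, h5⟩ := W.to_path h x y 0 0 rfl rfl
    exact ⟨p, ⟨h1, h2, h3, h4⟩, h5⟩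

lemma dtwSq_le {x y : List Bool} {n : ℕ} (h : W x y n) : dtwSq x y ≤ n := by
  rw [dtwSq_eq]; exact Nat.sInf_le h

lemma W_dtwSq {x y : List Bool} (hx : x ≠ []) (hy : y ≠ []) : W x y (dtwSq x y) := by
  rw [dtwSq_eq]
  apply Nat.sInf_mem (s := {n | W x y n})
  cases x with
  | nil => simp at hx
  | cons a x =>
    cases y with
    | nil => simp at hy
    | cons b y => exact W.exists_cons x y a b

lemma dtwSq_rev (x y : List Bool) : dtwSq x.reverse y.reverse = dtwSq x y := by
  rw [dtwSq_eq, dtwSq_eq]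
  congr 1
  ext n
  exact ⟨fun h => by simpa using W.rev h, fun h => W.rev h⟩

lemma W.collapse {x y : List Bool} {n : ℕ} (h : W x y n) : ∀ b u, y = b :: b :: u →
    ∃ m ≤ n, W x (b :: u) m := by
  induction h with
  | single a b => intro b u h; simp at h
  | down a b x y n h ih =>
    intro b' u hy
    obtain ⟨m, hm, hw⟩ := ih b' u hy
    simp at hy
    obtain ⟨rfl, -⟩ := hy
    exact ⟨_, by omega, W.down a b _ _ _ hw⟩
  | right a b x y n h ih =>
    intro b' u hy
    simp at hy
    obtain ⟨rfl, rfl⟩ := hy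
    exact ⟨n, by omega, h⟩
  | diag a b x y n h ih =>
    intro b' u hy
    simp at hy
    obtain ⟨rfl, rfl⟩ := hy
    exact ⟨_, le_refl _, W.down a b _ _ _ h⟩

/-- alternative candidate obtained by deletion -/
def alt (a : Bool) (u : List Bool) : List Bool := if u = [] then [a] else u

lemma alt_ne (a : Bool) (u : List Bool) : alt a u ≠ [] := by
  unfold alt; split_ifs <;> simp_all

lemma key_step (a b : Bool) (hab : b ≠ a) (t u : List Bool) (hu : ∀ e ∈ u.head?, e = a) (n : ℕ)
    (h : W (a :: t) (b :: u) n) :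
    (∃ m < n, W (a :: t) (a :: b :: u) m) ∨ (∃ m < n, W (a :: t) (alt a u) m) := by
  have hc : mc a b = 1 := by simp [mc, hab.symm]
  have h0 : ∀ c, mc c c = 0 := by simp [mc]
  cases h with
  | single => right; refine ⟨mc a a, by rw [hc, h0]; omega, ?_⟩; simp [alt]; exact W.single _ _
  | down _ _ _ _ n' h =>
    left; refine ⟨mc a a + n', by rw [hc, h0]; omega, W.diag _ _ _ _ _ h⟩
  | right _ _ _ _ n' h =>
    right; refine ⟨n', by omega, ?_⟩
    rw [alt, if_neg h.ne.2]; exact h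
  | diag _ _ _ _ n' h =>
    have hne := h.ne
    cases t with
    | nil => simp at hne
    | cons d t =>
    cases u with
    | nil => simp at hne
    | cons e u =>
    have he : e = a := hu e (by simp)
    subst he
    by_cases hd : d = e
    · right
      refine ⟨mc e e + n', by rw [hc, h0]; omega, ?_⟩
      simp only [alt]; exact W.down _ _ _ _ _ h
    · left
      have : d = b := by revert hd hab; cases d <;> cases e <;> cases b <;> simp
      subst this
      refine ⟨mc e e + (mc d d + n'), by rw [hc, h0, h0]; omega, ?_⟩
      exact W.diag _ _ _ _ _ (W.right _ _ _ _ _ h)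

lemma key_dtw (a b : Bool) (hab : b ≠ a) (s u : List Bool) (hs : s.head? = some a)
    (hu : ∀ e ∈ u.head?, e = a) :
    dtwSq s (a :: b :: u) < dtwSq s (b :: u) ∨ dtwSq s (alt a u) < dtwSq s (b :: u) := by
  cases s with
  | nil => simp at hs
  | cons a' t =>
    simp at hs; subst hs
    rcases key_step _ b hab t u hu _ (W_dtwSq (by simp) (by simp)) with ⟨m, hm, h⟩ | ⟨m, hm, h⟩
    · exact Or.inl ((dtwSq_le h).trans_lt hm)
    · exact Or.inr ((dtwSq_le h).trans_lt hm)

lemma prep_le (a b : Bool) (s u : List Bool) (hs : s.head? = some a) :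
    dtwSq s (a :: b :: u) ≤ dtwSq s (b :: u) := by
  cases s with
  | nil => simp at hs
  | cons a' t =>
    simp at hs; subst hs
    refine dtwSq_le ?_
    have := W.right a' a' _ _ _ (W_dtwSq (x := a' :: t) (y := b :: u) (by simp) (by simp))
    simpa [mc] using this

lemma coll_le (b : Bool) (s u : List Bool) (hs : s ≠ []) :
    dtwSq s (b :: u) ≤ dtwSq s (b :: b :: u) := by
  obtain ⟨m, hm, h⟩ := (W_dtwSq (y := b :: b :: u) hs (by simp)).collapse b u rfl
  exact (dtwSq_le h).trans hm

lemma Fobj3 (s1 s2 s3 z : List Bool) :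
    Fobj [s1, s2, s3] z = dtwSq s1 z + dtwSq s2 z + dtwSq s3 z := by
  simp [Fobj]; ring

lemma no_mean (a b : Bool) (hab : b ≠ a) (s1 s2 s3 : List Bool)
    (h1 : s1.head? = some a) (h2 : s2.head? = some a) (h3 : s3.head? = some a) (u : List Bool) :
    ¬ IsMean [s1, s2, s3] (b :: u) := by
  have base : ∀ u : List Bool, (∀ e ∈ u.head?, e = a) → ¬ IsMean [s1, s2, s3] (b :: u) := by
    rintro u hu ⟨-, hz⟩
    have A := hz (a :: b :: u) (by simp)
    have B := hz (alt a u) (alt_ne a u)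
    simp only [Fobj3] at A B
    have p1 := prep_le a b s1 u h1
    have p2 := prep_le a b s2 u h2
    have p3 := prep_le a b s3 u h3
    have k1 := key_dtw a b hab s1 u h1 hu
    have k2 := key_dtw a b hab s2 u h2 hu
    have k3 := key_dtw a b hab s3 u h3 hu
    omega
  induction u with
  | nil => exact base [] (by simp)
  | cons c u ih =>
    by_cases hcb : c = b
    · subst hcb
      rintro ⟨-, hz⟩
      refine ih ⟨by simp, fun w hw => le_trans ?_ (hz w hw)⟩
      simp only [Fobj3]
      have n1 : s1 ≠ [] := by rintro rfl; simp at h1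
      have n2 : s2 ≠ [] := by rintro rfl; simp at h2
      have n3 : s3 ≠ [] := by rintro rfl; simp at h3
      have := coll_le c s1 u n1
      have := coll_le c s2 u n2
      have := coll_le c s3 u n3
      omega
    · refine base _ ?_
      have : c = a := by cases c <;> cases a <;> cases b <;> simp_all
      simp [this]

lemma mean_head (s1 s2 s3 : List Bool) (hs1 : s1 ≠ [])
    (hf12 : s1.head? = s2.head?) (hf23 : s2.head? = s3.head?)
    (z : List Bool) (hz : IsMean [s1, s2, s3] z) : z.head? = s1.head? := by
  cases s1 with
  | nil => simp at hs1
  | cons a t =>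
    cases z with
    | nil => exact absurd rfl hz.1
    | cons b u =>
      by_contra hne
      have hab : b ≠ a := by simpa using hne
      have h2 : s2.head? = some a := by rw [← hf12]; rfl
      exact no_mean a b hab _ s2 s3 rfl h2 (by rw [← hf23]; exact h2) u hz

/-- if three binary strings share their first symbol and share
their last symbol, then every mean starts and ends with these symbols. -/
theorem mean_of_three_first_last (s1 s2 s3 : List Bool)
    (h1 : s1 ≠ []) (h2 : s2 ≠ []) (h3 : s3 ≠ [])
    (hf12 : s1.head? = s2.head?) (hf23 : s2.head? = s3.head?)
    (hl12 : s1.getLast? = s2.getLast?) (hl23 : s2.getLast? = s3.getLast?)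
    (z : List Bool) (hz : IsMean [s1, s2, s3] z) :
    z.head? = s1.head? ∧ z.getLast? = s1.getLast? := by
  refine ⟨mean_head s1 s2 s3 h1 hf12 hf23 z hz, ?_⟩
  have := mean_head s1.reverse s2.reverse s3.reverse (by simpa using h1) (by simpa using hl12)
    (by simpa using hl23) z.reverse ⟨by simpa using hz.1, ?_⟩
  · simpa using this
  · intro w hw
    have := hz.2 w.reverse (by simpa using hw)
    simp only [Fobj3] at this ⊢
    rw [← dtwSq_rev s1, ← dtwSq_rev s2, ← dtwSq_rev s3, ← dtwSq_rev s1 w.reverse,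
      ← dtwSq_rev s2 w.reverse, ← dtwSq_rev s3 w.reverse] at this
    simpa using this
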